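/- The quotient group L := W / (normal closure of (a*sigma*tau*sigma)^3 and (f*tau*sigma*tau)^3) is finite of order 2^9 * 3^8 * 5 * 13 (= 218350080), and L has a normal subgroup of index 4 isomorphic to (Z/3 x Z/3) x PSL(4,3), where PSL(4,3) is the quotient of SL(4, F_3) by its center. (Thus L is isomorphic to (3^2 x L_4(3)).2^2, the group of the universal polytope {{3,3,4,3}_{(3,0,0,0)}, {3,4,3,3}_{(3,0,0,0)}}.) -/

import Mathlib

/-- Coxeter matrix of the string diagram [3,3,4,3,3] on generators a,b,c,d,e,f = 0..5. -/
def cox6 : Fin 6 → Fin 6 → ℕ := fun i j =>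
  if i = j then 1
  else if (i : ℕ) + 1 = (j : ℕ) ∨ (j : ℕ) + 1 = (i : ℕ) then
    (if ((i : ℕ) = 2 ∧ (j : ℕ) = 3) ∨ ((i : ℕ) = 3 ∧ (j : ℕ) = 2) then 4 else 3)
  else 2

def rels6 : Set (FreeGroup (Fin 6)) :=
  Set.range fun p : Fin 6 × Fin 6 => (FreeGroup.of p.1 * FreeGroup.of p.2) ^ cox6 p.1 p.2

/-- The Coxeter group of type [3,3,4,3,3]. -/
abbrev W : Type := PresentedGroup rels6

/-- The generators a,b,c,d,e,f of W, as w 0, ..., w 5. -/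
def w (i : Fin 6) : W := PresentedGroup.of i

/-- sigma = d^(cb) = b*c*d*c*b. -/
def sg : W := w 1 * w 2 * w 3 * w 2 * w 1
/-- tau = c^(de) = e*d*c*d*e. -/
def tu : W := w 4 * w 3 * w 2 * w 3 * w 4

/-- L: the quotient of W by the normal closure of (a σ τ σ)^3 and (f τ σ τ)^3,
the group of the universal polytope {{3,3,4,3}_{(3,0,0,0)}, {3,4,3,3}_{(3,0,0,0)}}. -/
abbrev L : Type :=
  W ⧸ Subgroup.normalClosure
    ({(w 0 * sg * tu * sg) ^ 3, (w 5 * tu * sg * tu) ^ 3} : Set W)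

/-- PSL(4,3): the quotient of SL(4, F_3) by its center. -/
abbrev PSL43 : Type :=
  Matrix.SpecialLinearGroup (Fin 4) (ZMod 3) ⧸
    Subgroup.center (Matrix.SpecialLinearGroup (Fin 4) (ZMod 3))

/-!
Over the field with three elements, alternating `4 × 4` matrices combined with the inverse transpose
act as reflections. Six of them, together with two maps onto the symmetric group `S₃`, satisfy the
relations of `L` and give an epimorphism of `L` onto a semidirect product
`(3² × PSL(4, 3)) : 2²` of order `218350080`: its image contains a transvection, and hence all
elementary ones, which generate `SL(4, 3)`. Conversely, coset enumeration along the chain of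
subgroups `1 ≤ ⟨b, c, d⟩ ≤ ⟨b, c, d, e⟩ ≤ ⟨a, b, c, d, e⟩ ≤ L` bounds the order of `L` by
`48 * 24 * 81 * 2340 = 218350080`. The enumeration is run by the kernel, and is proved sound by
reading each coset number as a coset. So the epimorphism is an isomorphism, and the subgroup of
index `4` is the kernel of the map onto `2²`.
-/

theorem eq_top_of_ker_le_of_map_eq_top {G K : Type*} [Group G] [Group K] (f : G →* K)
    {H : Subgroup G} (hker : f.ker ≤ H) (hmap : H.map f = ⊤) : H = ⊤ := by
  rw [← Subgroup.comap_map_eq_self hker, hmap, Subgroup.comap_top]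

theorem nonempty_comap_ker_rightHom_mulEquiv {G N K : Type*} [Group G] [Group N] [Group K]
    {φ : K →* MulAut N} (e : G ≃* N ⋊[φ] K) :
    Nonempty ((SemidirectProduct.rightHom (φ := φ)).ker.comap (e : G →* N ⋊[φ] K) ≃* N) := by
  rw [← SemidirectProduct.range_inl_eq_ker_rightHom, MonoidHom.range_eq_map,
    Subgroup.comap_equiv_eq_map_symm, Subgroup.map_map, ← MonoidHom.range_eq_map]
  exact ⟨(MonoidHom.ofInjective (e.symm.injective.comp SemidirectProduct.inl_injective)).symm⟩

theorem conj_mul_self {G : Type*} [Group G] {b y : G} (hb : b * b = 1) (hy : y * y = 1) :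
    b * y * b * (b * y * b) = 1 := by
  rw [show b * y * b * (b * y * b) = b * (y * (b * b) * y) * b by group, hb, mul_one, hy, mul_one,
    hb]

section Quotient

variable {G : Type*} [Group G] (K : Subgroup G) [K.Characteristic]

/-- The action of the automorphisms of `G` on its quotient by a characteristic subgroup. -/
def quotientAut : MulAut G →* MulAut (G ⧸ K) where
  toFun θ := QuotientGroup.congr K K θ (Subgroup.characteristic_iff_map_eq.mp inferInstance θ)
  map_one' := MulEquiv.ext fun q ↦ QuotientGroup.induction_on q fun _ ↦ rfl
  map_mul' _ _ := MulEquiv.ext fun q ↦ QuotientGroup.induction_on q fun _ ↦ rfl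

theorem quotientAut_mk (θ : MulAut G) (g : G) : quotientAut K θ (g : G ⧸ K) = (θ g : G) :=
  rfl

end Quotient

section AlternatingProd

variable {ι M N : Type*} [Monoid M] [Monoid N]

/-- The product `x i₁ * y i₂ * x i₃ * y i₄ * ⋯` along a word `[i₁, i₂, i₃, i₄, …]`. If `y = θ ∘ x`
for an involutive automorphism `θ` of `M`, it is the component in `M` of the product of the elements
`(x i, θ)` of `M ⋊ ⟨θ⟩`. -/
def alternatingProd (x y : ι → M) : List ι → M
  | [] => 1
  | i :: u => x i * alternatingProd y x u

theorem map_alternatingProd {E : Type*} [FunLike E M N] [MonoidHomClass E M N] (f : E)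
    (x y : ι → M) (u : List ι) :
    f (alternatingProd x y u) = alternatingProd (f ∘ x) (f ∘ y) u := by
  induction u generalizing x y with
  | nil => exact map_one f
  | cons i u ih => rw [alternatingProd, map_mul, ih]; rfl

theorem prod_map_flatten_replicate (x : ι → M) (k : ℕ) (u : List ι) :
    ((List.replicate k u).flatten.map x).prod = (u.map x).prod ^ k := by
  rw [List.map_flatten, List.prod_flatten, List.map_replicate, List.map_replicate,
    List.prod_replicate]

end AlternatingProd

section KleinAction

/-- The homomorphism `ℤˣ →* H` sending `-1` to an element `x` of order dividing two. -/
def unitsIntLift {H : Type*} [Group H] (x : H) (hx : x * x = 1) : ℤˣ →* H :=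
  MonoidHom.mk' (fun u ↦ if u = 1 then 1 else x) fun u v ↦ by
    rcases Int.units_eq_one_or u with rfl | rfl <;>
      rcases Int.units_eq_one_or v with rfl | rfl <;> simp [hx]

theorem unitsIntLift_neg_one {H : Type*} [Group H] (x : H) (hx : x * x = 1) :
    unitsIntLift x hx (-1) = x := rfl

theorem unitsIntLift_commute {H : Type*} [Group H] {x y : H} (hx : x * x = 1) (hy : y * y = 1)
    (h : Commute x y) (u v : ℤˣ) : Commute (unitsIntLift x hx u) (unitsIntLift y hy v) := by
  rcases Int.units_eq_one_or u with rfl | rfl <;>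
    rcases Int.units_eq_one_or v with rfl | rfl <;> simp [unitsIntLift_neg_one, h]

/-- The action of `ℤˣ × ℤˣ` in which `(-1, 1)` and `(1, -1)` act by commuting involutions. -/
def kleinHom {H : Type*} [Group H] {x y : H} (hx : x * x = 1) (hy : y * y = 1)
    (h : Commute x y) : ℤˣ × ℤˣ →* H :=
  (unitsIntLift x hx).noncommCoprod (unitsIntLift y hy) (unitsIntLift_commute hx hy h)

end KleinAction

namespace SpecialLinear

open Matrix
open Matrix.SpecialLinearGroup (transvection diag2n coeMonoidHom coeMonoidHom_injective)

section Generation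

variable {ι F : Type*} [Fintype ι] [DecidableEq ι] [Field F]

theorem coe_transvection_mul_transvection_mul_transvection {i j : ι} (hij : i ≠ j) {a : F}
    (ha : a ≠ 0) :
    coeMonoidHom (transvection hij a * transvection hij.symm (-a⁻¹) * transvection hij a) =
      1 - single i i 1 - single j j 1 + single i j a - single j i a⁻¹ := by
  simp only [map_mul, SpecialLinearGroup.coeMonoidHom_apply, SpecialLinearGroup.transvection_coe,
    mul_add, add_mul, mul_one, one_mul, single_mul_single_same,
    single_mul_single_of_ne _ _ _ _ hij.symm, mul_neg, neg_mul, mul_inv_cancel₀ ha,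
    inv_mul_cancel₀ ha, ← Matrix.single_neg]
  abel

theorem diag2n_eq_mul_transvection {i j : ι} (hij : i ≠ j) {a : F} (ha : a ≠ 0) :
    diag2n hij a ha =
      transvection hij a * transvection hij.symm (-a⁻¹) * transvection hij a *
        (transvection hij (-1) * transvection hij.symm (-(-1)⁻¹) * transvection hij (-1)) := by
  apply coeMonoidHom_injective
  rw [map_mul, coe_transvection_mul_transvection_mul_transvection hij ha,
    coe_transvection_mul_transvection_mul_transvection hij (neg_ne_zero.mpr one_ne_zero)]
  ext k l
  simp [mul_add, add_mul, mul_sub, sub_mul, single_mul_single_of_ne _ _ _ _ hij,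
    single_mul_single_of_ne _ _ _ _ hij.symm, SpecialLinearGroup.diag2n_coe, diagonal_apply,
    single_apply, one_apply]
  grind

theorem eq_top_of_transvection_mem [Nontrivial ι] {H : Subgroup (SpecialLinearGroup ι F)}
    (h : ∀ (i j : ι) (hij : i ≠ j) (c : F), transvection hij c ∈ H) : H = ⊤ := by
  refine (Subgroup.eq_top_iff' H).mpr fun A ↦ ?_
  refine SpecialLinearGroup.diagonal_transvection_induction' (· ∈ H) A (fun i j hij c hc ↦ ?_) h
    fun _ _ ↦ mul_mem
  rw [diag2n_eq_mul_transvection hij hc]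
  have weyl_mem (c : F) :
      transvection hij c * transvection hij.symm (-c⁻¹) * transvection hij c ∈ H :=
    mul_mem (mul_mem (h i j hij _) (h j i hij.symm _)) (h i j hij _)
  exact mul_mem (weyl_mem c) (weyl_mem (-1))

theorem transvection_natCast {i j : ι} (hij : i ≠ j) (n : ℕ) :
    transvection hij (n : F) = transvection hij 1 ^ n := by
  induction n with
  | zero => rw [Nat.cast_zero, SpecialLinearGroup.transvection_coeff_zero, pow_zero]
  | succ n ih => rw [Nat.cast_succ, SpecialLinearGroup.transvection_add, ih, pow_succ]

theorem eq_top_of_transvection_one_mem [Nontrivial ι] {p : ℕ} [Fact p.Prime]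
    {H : Subgroup (SpecialLinearGroup ι (ZMod p))}
    (h : ∀ (i j : ι) (hij : i ≠ j), transvection hij 1 ∈ H) : H = ⊤ := by
  refine eq_top_of_transvection_mem fun i j hij c ↦ ?_
  rw [← ZMod.natCast_zmod_val c, transvection_natCast]
  exact pow_mem (h i j hij) _

end Generation

section Card

variable (F : Type*) [Field F] [Fintype F] (n : ℕ)

theorem card_mul_card_units [NeZero n] :
    Nat.card (SpecialLinearGroup (Fin n) F) * Nat.card Fˣ =
      ∏ i : Fin n, (Fintype.card F ^ n - Fintype.card F ^ (i : ℕ)) := by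
  have hdet := GeneralLinearGroup.det_surjective (n := Fin n) (R := F)
  have hker : (SpecialLinearGroup.toGL (n := Fin n) (R := F)).range = GeneralLinearGroup.det.ker :=
    SetLike.coe_injective SpecialLinearGroup.range_toGL
  rw [← card_GL_field n, ← Subgroup.card_mul_index GeneralLinearGroup.det.ker,
    Subgroup.index_ker, MonoidHom.range_eq_top.mpr hdet, Subgroup.card_top, ← hker,
    Nat.card_congr (MonoidHom.ofInjective SpecialLinearGroup.toGL_injective).toEquiv]

omit [Fintype F] in
theorem card_center [NeZero n] :
    Nat.card (Subgroup.center (SpecialLinearGroup (Fin n) F)) = Nat.card (rootsOfUnity n F) := by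
  rw [Nat.card_congr (SpecialLinearGroup.center_equiv_rootsOfUnity' (0 : Fin n)).toEquiv,
    Fintype.card_fin]

end Card

section InverseTranspose

variable {ι R : Type*} [Fintype ι] [DecidableEq ι] [CommRing R]

theorem transpose_mul (A B : SpecialLinearGroup ι R) :
    (A * B).transpose = B.transpose * A.transpose :=
  Subtype.ext (Matrix.transpose_mul _ _)

theorem transpose_transpose (A : SpecialLinearGroup ι R) : A.transpose.transpose = A :=
  Subtype.ext (Matrix.transpose_transpose _)

theorem transpose_inv (A : SpecialLinearGroup ι R) : A.transpose⁻¹ = A⁻¹.transpose := by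
  refine inv_eq_of_mul_eq_one_right ?_
  rw [← transpose_mul, inv_mul_cancel]
  exact Subtype.ext Matrix.transpose_one

theorem inv_transpose_involutive :
    Function.Involutive fun A : SpecialLinearGroup ι R ↦ A⁻¹.transpose := fun A ↦ by
  change (A⁻¹.transpose)⁻¹.transpose = A
  rw [← transpose_inv, transpose_transpose, inv_inv]

/-- The automorphism `A ↦ A⁻ᵀ` of the special linear group. -/
def inverseTranspose : MulAut (SpecialLinearGroup ι R) where
  toFun A := A⁻¹.transpose
  invFun A := A⁻¹.transpose
  left_inv := inv_transpose_involutive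
  right_inv := inv_transpose_involutive
  map_mul' A B := by rw [_root_.mul_inv_rev, transpose_mul]

theorem inverseTranspose_mul_self :
    (inverseTranspose : MulAut (SpecialLinearGroup ι R)) * inverseTranspose = 1 :=
  MulEquiv.self_trans_symm inverseTranspose

theorem inverseTranspose_eq_of_mul_transpose_eq_one {A B : SpecialLinearGroup ι R}
    (h : coeMonoidHom A * (coeMonoidHom B)ᵀ = 1) : inverseTranspose A = B := by
  have hAB : A * B.transpose = 1 := Subtype.ext h
  change A⁻¹.transpose = B
  rw [inv_eq_of_mul_eq_one_right hAB, transpose_transpose]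

theorem mk_eq_mk_of_coe_eq_smul [Nonempty ι] {A B : SpecialLinearGroup ι R} {s : R}
    (h : coeMonoidHom A = s • coeMonoidHom B) :
    (A : SpecialLinearGroup ι R ⧸ Subgroup.center (SpecialLinearGroup ι R)) = B := by
  have hs : s ^ Fintype.card ι = 1 := by
    have hdet := congrArg Matrix.det h
    rwa [det_smul, SpecialLinearGroup.coeMonoidHom_apply, SpecialLinearGroup.coeMonoidHom_apply,
      A.det_coe, B.det_coe, mul_one, eq_comm] at hdet
  refine (QuotientGroup.eq.mpr (Matrix.SpecialLinearGroup.mem_center_iff.mpr ⟨s, hs, ?_⟩)).symm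
  calc Matrix.scalar ι s = s • coeMonoidHom (B⁻¹ * B) := by
        rw [inv_mul_cancel, map_one, scalar_apply, smul_one_eq_diagonal]
    _ = coeMonoidHom (B⁻¹ * A) := by rw [map_mul, map_mul, h, Matrix.mul_smul]

end InverseTranspose

end SpecialLinear

namespace Target

open Matrix
open Matrix.SpecialLinearGroup (transvection coeMonoidHom)
open SpecialLinear

section Evaluation

variable {ι : Type*}

/-- Passes to `k` the numeral equal to `x`, so that the kernel evaluates `x` only once. -/
def force {α : Type*} (x : ZMod 3) (k : ZMod 3 → α) : α :=
  if x = 0 then k 0 else if x = 1 then k 1 else k 2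

theorem force_eq {α : Type*} (x : ZMod 3) (k : ZMod 3 → α) : force x k = k x := by
  fin_cases x <;> rfl

/-- The row vector `v ᵥ* alternatingProd x y u`, computed letter by letter. -/
def vecMulWord (x y : ι → Matrix (Fin 4) (Fin 4) (ZMod 3)) :
    List ι → (Fin 4 → ZMod 3) → Fin 4 → ZMod 3
  | [], v => v
  | i :: u, v =>
    force ((v ᵥ* x i) 0) fun a ↦ force ((v ᵥ* x i) 1) fun b ↦
      force ((v ᵥ* x i) 2) fun c ↦ force ((v ᵥ* x i) 3) fun d ↦ vecMulWord y x u ![a, b, c, d]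

theorem vecMulWord_eq (x y : ι → Matrix (Fin 4) (Fin 4) (ZMod 3)) (u : List ι)
    (v : Fin 4 → ZMod 3) : vecMulWord x y u v = v ᵥ* alternatingProd x y u := by
  induction u generalizing x y v with
  | nil => exact (vecMul_one v).symm
  | cons i u ih =>
    have heta : ![(v ᵥ* x i) 0, (v ᵥ* x i) 1, (v ᵥ* x i) 2, (v ᵥ* x i) 3] = v ᵥ* x i :=
      List.ofFn_injective rfl
    simp only [vecMulWord, force_eq]
    rw [heta, ih, alternatingProd, vecMul_vecMul]

theorem alternatingProd_eq_of_vecMulWord {x y : ι → Matrix (Fin 4) (Fin 4) (ZMod 3)} {u : List ι}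
    {A : Matrix (Fin 4) (Fin 4) (ZMod 3)} (h : ∀ i, vecMulWord x y u (Pi.single i 1) = A i) :
    alternatingProd x y u = A := by
  ext i j
  rw [← h i, vecMulWord_eq, single_one_vecMul]; rfl

end Evaluation

/-- The special linear group of degree four over the field with three elements. -/
abbrev SL43 : Type := Matrix.SpecialLinearGroup (Fin 4) (ZMod 3)

/-- Alternating matrices `A₀, …, A₅` over `𝔽₃`, one for each generator of the Coxeter group. As
vectors of the exterior square of `𝔽₃⁴` with its Pfaffian they have norm `1, 1, 1, -1, -1, -1`. For
an alternating matrix `A * A⁻ᵀ = -1` is central, so that `A`, followed by the inverse transpose, is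
an involution modulo scalars; up to sign it acts on the exterior square as the reflection in `A`. -/
def formMatrix : Fin 6 → Matrix (Fin 4) (Fin 4) (ZMod 3) :=
  ![!![0, 0, 0, 1; 0, 0, 1, 0; 0, 2, 0, 0; 2, 0, 0, 0],
    !![0, 0, 0, 1; 0, 0, 1, 0; 0, 2, 0, 1; 2, 0, 2, 0],
    !![0, 2, 0, 0; 1, 0, 0, 0; 0, 0, 0, 2; 0, 0, 1, 0],
    !![0, 0, 0, 1; 0, 0, 2, 0; 0, 1, 0, 1; 2, 0, 2, 0],
    !![0, 0, 0, 2; 0, 0, 1, 1; 0, 2, 0, 0; 1, 2, 0, 0],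
    !![0, 0, 1, 0; 0, 0, 0, 1; 2, 0, 0, 0; 0, 2, 0, 0]]

/-- The inverse transposes of the matrices in `formMatrix`, tabulated to spare the kernel their
computation. -/
def dualFormMatrix : Fin 6 → Matrix (Fin 4) (Fin 4) (ZMod 3) :=
  ![!![0, 0, 0, 1; 0, 0, 1, 0; 0, 2, 0, 0; 2, 0, 0, 0],
    !![0, 1, 0, 1; 2, 0, 1, 0; 0, 2, 0, 0; 2, 0, 0, 0],
    !![0, 2, 0, 0; 1, 0, 0, 0; 0, 0, 0, 2; 0, 0, 1, 0],
    !![0, 2, 0, 1; 1, 0, 2, 0; 0, 1, 0, 0; 2, 0, 0, 0],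
    !![0, 0, 1, 2; 0, 0, 1, 0; 2, 2, 0, 0; 1, 0, 0, 0],
    !![0, 0, 1, 0; 0, 0, 0, 1; 2, 0, 0, 0; 0, 2, 0, 0]]

theorem det_formMatrix : ∀ g, (formMatrix g).det = 1 := by decide +kernel

theorem det_dualFormMatrix : ∀ g, (dualFormMatrix g).det = 1 := by decide +kernel

theorem formMatrix_mul_transpose : ∀ g, formMatrix g * (dualFormMatrix g)ᵀ = 1 := by
  decide +kernel

theorem dualFormMatrix_mul_transpose : ∀ g, dualFormMatrix g * (formMatrix g)ᵀ = 1 := by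
  decide +kernel

/-- `formMatrix g` as an element of the special linear group. -/
def form (g : Fin 6) : SL43 := ⟨formMatrix g, det_formMatrix g⟩

/-- `dualFormMatrix g` as an element of the special linear group. -/
def dualForm (g : Fin 6) : SL43 := ⟨dualFormMatrix g, det_dualFormMatrix g⟩

theorem inverseTranspose_form (g : Fin 6) : inverseTranspose (form g) = dualForm g :=
  inverseTranspose_eq_of_mul_transpose_eq_one (formMatrix_mul_transpose g)

theorem inverseTranspose_dualForm (g : Fin 6) : inverseTranspose (dualForm g) = form g :=
  inverseTranspose_eq_of_mul_transpose_eq_one (dualFormMatrix_mul_transpose g)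

/-- The cyclic group of order three. -/
abbrev C3 : Type := Multiplicative (ZMod 3)

/-- The automorphism of `PSL(4, 3)` induced by the inverse transpose. -/
def polarity : MulAut PSL43 := quotientAut _ inverseTranspose

theorem polarity_mul_self : polarity * polarity = 1 := by
  rw [polarity, ← map_mul, inverseTranspose_mul_self, map_one]

/-- Acts on `C₃ × C₃` by inverting the first factor, and on `PSL(4, 3)` by the polarity. -/
def leftTwist : MulAut ((C3 × C3) × PSL43) :=
  ((MulEquiv.inv C3).prodCongr (MulEquiv.refl C3)).prodCongr polarity

/-- Acts on `C₃ × C₃` by inverting the second factor, and on `PSL(4, 3)` by the polarity. -/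
def rightTwist : MulAut ((C3 × C3) × PSL43) :=
  ((MulEquiv.refl C3).prodCongr (MulEquiv.inv C3)).prodCongr polarity

theorem leftTwist_mul_self : leftTwist * leftTwist = 1 :=
  MulEquiv.ext fun ⟨⟨a, _⟩, q⟩ ↦
    Prod.ext (Prod.ext (inv_inv a) rfl) (DFunLike.congr_fun polarity_mul_self q)

theorem rightTwist_mul_self : rightTwist * rightTwist = 1 :=
  MulEquiv.ext fun ⟨⟨_, b⟩, q⟩ ↦
    Prod.ext (Prod.ext rfl (inv_inv b)) (DFunLike.congr_fun polarity_mul_self q)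

theorem leftTwist_commute_rightTwist : Commute leftTwist rightTwist := rfl

/-- The action of the Klein four-group `ℤˣ × ℤˣ` through `leftTwist` and `rightTwist`. -/
def twist : ℤˣ × ℤˣ →* MulAut ((C3 × C3) × PSL43) :=
  kleinHom leftTwist_mul_self rightTwist_mul_self leftTwist_commute_rightTwist

/-- The group `(3² × L₄(3)) : 2²`, which is going to be the image of `L`. -/
abbrev T : Type := ((C3 × C3) × PSL43) ⋊[twist] (ℤˣ × ℤˣ)

theorem card_SL43 : Nat.card SL43 = 12130560 := by
  have h := card_mul_card_units (ZMod 3) 4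
  rw [Nat.card_eq_fintype_card (α := (ZMod 3)ˣ), ZMod.card_units, ZMod.card,
    Fin.prod_univ_four] at h
  norm_num [-Nat.card_eq_fintype_card] at h
  lia

theorem card_center_SL43 : Nat.card (Subgroup.center SL43) = 2 := by
  have h : rootsOfUnity 4 (ZMod 3) = ⊤ := by
    have hpow : ∀ u : (ZMod 3)ˣ, u ^ 4 = 1 := by decide
    exact eq_top_iff.mpr fun u _ ↦ (mem_rootsOfUnity 4 u).mpr (hpow u)
  rw [card_center, h, Subgroup.card_top, Nat.card_eq_fintype_card, ZMod.card_units]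

theorem card_PSL43 : Nat.card PSL43 = 6065280 := by
  have h := Subgroup.card_eq_card_quotient_mul_card_subgroup (Subgroup.center SL43)
  rw [card_SL43, card_center_SL43] at h
  change 12130560 = Nat.card PSL43 * 2 at h
  lia

theorem card_T : Nat.card T = 218350080 := by
  rw [Nat.card_congr SemidirectProduct.equivProd, Nat.card_prod, Nat.card_prod, card_PSL43,
    Nat.card_eq_fintype_card, Nat.card_eq_fintype_card]
  rfl

/-- The images in the target of the generators `a, …, f`. Their components outside
`PSL(4, 3)` come from two maps of `W` onto the symmetric group `S₃`: one sends `a` and `c` to a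
transposition, `b` to another one and `d`, `e`, `f` to `1`, and the other is its mirror image. -/
def gen (g : Fin 6) : T :=
  ⟨((if g = 1 then .ofAdd 1 else 1, if g = 4 then .ofAdd 1 else 1), form g),
    if g < 3 then (-1, 1) else (1, -1)⟩

theorem twist_gen_right_snd (g : Fin 6) (p : (C3 × C3) × PSL43) :
    (twist (gen g).right p).2 = polarity p.2 := by
  fin_cases g <;> rfl

theorem inverseTranspose_alternatingProd (u : List (Fin 6)) :
    inverseTranspose (alternatingProd form dualForm u) = alternatingProd dualForm form u := by
  have hform : inverseTranspose ∘ form = dualForm := funext inverseTranspose_form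
  have hdual : inverseTranspose ∘ dualForm = form := funext inverseTranspose_dualForm
  rw [map_alternatingProd, hform, hdual]

theorem prod_gen_left_snd (u : List (Fin 6)) :
    (u.map gen).prod.left.2 = (alternatingProd form dualForm u : SL43) := by
  induction u with
  | nil => rfl
  | cons g u ih =>
    rw [List.map_cons, List.prod_cons, SemidirectProduct.mul_left, Prod.snd_mul,
      twist_gen_right_snd, ih, polarity, quotientAut_mk, inverseTranspose_alternatingProd]
    rfl

/-- The word `u` in the generators of the target has the value `⟨(p, ±A), k⟩`, in a form which can
be decided by computation. -/
abbrev HasValue (u : List (Fin 6)) (p : C3 × C3) (A : SL43) (k : ℤˣ × ℤˣ) : Prop :=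
  (u.map gen).prod.left.1 = p ∧ (u.map gen).prod.right = k ∧ ∃ s : ZMod 3, ∀ i,
    vecMulWord formMatrix dualFormMatrix u (Pi.single i 1) = s • coeMonoidHom A i

theorem HasValue.prod_eq {u : List (Fin 6)} {p : C3 × C3} {A : SL43} {k : ℤˣ × ℤˣ}
    (h : HasValue u p A k) : (u.map gen).prod = ⟨(p, A), k⟩ := by
  obtain ⟨hfst, hright, s, hs⟩ := h
  refine SemidirectProduct.ext (Prod.ext hfst ?_) hright
  rw [prod_gen_left_snd]
  refine mk_eq_mk_of_coe_eq_smul (s := s) ?_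
  rw [map_alternatingProd]
  exact alternatingProd_eq_of_vecMulWord hs

theorem HasValue.prod_pow_eq_one {u : List (Fin 6)} {k : ℕ}
    (h : HasValue (List.replicate k u).flatten 1 1 1) : (u.map gen).prod ^ k = 1 :=
  (prod_map_flatten_replicate gen k u).symm.trans h.prod_eq

theorem gen_mul_gen_pow_cox6 (i j : Fin 6) : (gen i * gen j) ^ cox6 i j = 1 := by
  have h : ∀ i j, HasValue (List.replicate (cox6 i j) [i, j]).flatten 1 1 1 := by decide +kernel
  rw [← (h i j).prod_pow_eq_one, List.map_cons, List.prod_cons, List.map_singleton,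
    List.prod_singleton]

/-- The word `bcdcb` for `σ`. -/
def sigmaWord : List (Fin 6) := [1, 2, 3, 2, 1]

/-- The word `edcde` for `τ`. -/
def tauWord : List (Fin 6) := [4, 3, 2, 3, 4]

/-- The homomorphism from the Coxeter group to the target. -/
def ofCoxeter : W →* T :=
  PresentedGroup.toGroup (f := gen) <| by
    rintro _ ⟨⟨i, j⟩, rfl⟩
    rw [map_pow, map_mul, FreeGroup.lift_apply_of, FreeGroup.lift_apply_of, gen_mul_gen_pow_cox6]

theorem ofCoxeter_w (i : Fin 6) : ofCoxeter (w i) = gen i := PresentedGroup.toGroup.of _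

theorem ofCoxeter_prod (u : List (Fin 6)) : ofCoxeter (u.map w).prod = (u.map gen).prod := by
  rw [map_list_prod, List.map_map, show ofCoxeter ∘ w = gen from funext ofCoxeter_w]

theorem ofCoxeter_relator_left : ofCoxeter ((w 0 * sg * tu * sg) ^ 3) = 1 := by
  have h : HasValue (List.replicate 3 ([0] ++ sigmaWord ++ tauWord ++ sigmaWord)).flatten
      1 1 1 := by decide +kernel
  rw [map_pow, ← h.prod_pow_eq_one, ← ofCoxeter_prod]
  simp only [List.map_append, List.prod_append]
  rfl

theorem ofCoxeter_relator_right : ofCoxeter ((w 5 * tu * sg * tu) ^ 3) = 1 := by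
  have h : HasValue (List.replicate 3 ([5] ++ tauWord ++ sigmaWord ++ tauWord)).flatten
      1 1 1 := by decide +kernel
  rw [map_pow, ← h.prod_pow_eq_one, ← ofCoxeter_prod]
  simp only [List.map_append, List.prod_append]
  rfl

/-- The homomorphism from `L` to the target, which will turn out to be an isomorphism. -/
def toTarget : L →* T :=
  QuotientGroup.lift _ ofCoxeter <| Subgroup.normalClosure_le_normal <| by
    rintro _ (rfl | rfl)
    · exact ofCoxeter_relator_left
    · exact ofCoxeter_relator_right

/-- A word for a transvection, up to conjugacy. -/
def transvectionRoot : List (Fin 6) := (List.replicate 6 [1, 2, 0, 4, 3]).flatten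

/-- Words, found by a search, conjugating `transvectionRoot` into the elementary transvections. -/
def conjugator : Matrix (Fin 4) (Fin 4) (List (Fin 6)) :=
  !![[], [5, 0, 1], [4, 5, 3, 2, 3, 4, 3, 2, 3, 1, 2, 3, 4, 5, 1, 2, 1, 0], [5, 3, 1, 2, 0];
    [1], [], [3, 1, 2, 0], [4, 5, 3, 2, 3, 4, 3, 2, 3, 0, 1, 2, 3, 4, 5, 1, 2, 1, 0];
    [3, 4, 5, 3, 2, 3, 4, 3, 2, 3, 1, 2, 3, 4, 5, 2, 1, 0], [5, 2, 3, 1, 2, 0], [], [5, 3];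
    [2, 3, 1, 2, 0], [4, 5, 3, 2, 3, 4, 3, 2, 3, 1, 2, 3, 4, 5, 4, 2, 0], [3, 0], []]

/-- A word for the elementary transvection with the entry `1` at `(i, j)`, if `i ≠ j`. -/
def transvectionWord (i j : Fin 4) : List (Fin 6) :=
  conjugator i j ++ transvectionRoot ++ (conjugator i j).reverse

theorem hasValue_transvectionWord : ∀ (i j : Fin 4) (hij : i ≠ j),
    HasValue (transvectionWord i j) 1 (transvection hij 1) 1 := by
  decide +kernel

section Generation

variable {H : Subgroup T} (hH : ∀ g, gen g ∈ H)
include hH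

theorem prod_gen_mem (u : List (Fin 6)) : (u.map gen).prod ∈ H :=
  Subgroup.list_prod_mem _ <| List.forall_mem_map.mpr fun g _ ↦ hH g

theorem inl_one_mk_mem (A : SL43) : SemidirectProduct.inl (1, (A : PSL43)) ∈ H := by
  let f : SL43 →* T :=
    (SemidirectProduct.inl.comp (MonoidHom.inr (C3 × C3) PSL43)).comp (QuotientGroup.mk' _)
  suffices h : H.comap f = ⊤ from (h ▸ Subgroup.mem_top A : A ∈ H.comap f)
  refine eq_top_of_transvection_one_mem fun i j hij ↦ ?_
  have h := prod_gen_mem hH (transvectionWord i j)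
  rw [(hasValue_transvectionWord i j hij).prod_eq] at h
  exact h

theorem ker_rightHom_le : SemidirectProduct.rightHom.ker ≤ H := by
  rw [← SemidirectProduct.range_inl_eq_ker_rightHom, MonoidHom.range_eq_map,
    Subgroup.map_le_iff_le_comap, top_le_iff]
  refine eq_top_of_ker_le_of_map_eq_top (MonoidHom.fst _ _) ?_ ?_
  · rintro ⟨p, q⟩ rfl
    obtain ⟨A, rfl⟩ := QuotientGroup.mk_surjective q
    exact inl_one_mk_mem hH A
  · have hvalue : ∀ p : C3 × C3, ∃ m n : Fin 3,
        ((gen 1 * gen 0) ^ (m : ℕ) * (gen 4 * gen 3) ^ (n : ℕ)).left.1 = p ∧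
          ((gen 1 * gen 0) ^ (m : ℕ) * (gen 4 * gen 3) ^ (n : ℕ)).right = 1 := by
      decide +kernel
    refine (Subgroup.eq_top_iff' _).mpr fun p ↦ ?_
    obtain ⟨m, n, hp, hright⟩ := hvalue p
    have hmem := mul_mem (pow_mem (mul_mem (hH 1) (hH 0)) m) (pow_mem (mul_mem (hH 4) (hH 3)) n)
    rw [← SemidirectProduct.inl_left_mul_inr_right (_ * _), hright, map_one, mul_one] at hmem
    exact ⟨_, hmem, hp⟩

theorem eq_top_of_gen_mem : H = ⊤ := by
  refine eq_top_of_ker_le_of_map_eq_top SemidirectProduct.rightHom (ker_rightHom_le hH) ?_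
  have hvalue : ∀ k : ℤˣ × ℤˣ, ∃ m n : Fin 2,
      (gen 0 ^ (m : ℕ) * gen 3 ^ (n : ℕ)).right = k := by
    decide +kernel
  refine (Subgroup.eq_top_iff' _).mpr fun k ↦ ?_
  obtain ⟨m, n, h⟩ := hvalue k
  exact ⟨_, mul_mem (pow_mem (hH 0) m) (pow_mem (hH 3) n), h⟩

end Generation

theorem toTarget_surjective : Function.Surjective toTarget := by
  refine MonoidHom.range_eq_top.mp (eq_top_of_gen_mem fun g ↦ ⟨(w g : L), ?_⟩)
  exact ofCoxeter_w g

end Target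

namespace CosetEnumeration

/-- An edge of a coset graph: the letter `letter` carries the coset `src` to the coset `dst`. -/
structure Edge where
  src : ℕ
  letter : ℕ
  dst : ℕ

/-- A partial coset table, one natural number per letter. Cosets are numbered from `1`, and digit
`i` in base `4096` of column `g` is the image of coset `i` under the letter `g`, or `0` while it is
unknown. Digit `0` is a checksum: the kernel hashes a numeral by its lowest `64` bits, and the
checksum keeps successive versions of a column from colliding. -/
abbrev Table := List ℕ

/-- Case distinction on `n`. The recursor makes the kernel evaluate `n` before it goes on, so that
`c` gets a numeral. -/
def ifPos {β : Type} (n : ℕ) (d : β) (c : ℕ → β) : β :=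
  Nat.rec (motive := fun _ ↦ β) d (fun k _ ↦ c k.succ) n

-- Here and below, recursors and `Nat` operations are written out where the kernel spends its time.
/-- The images of all cosets under the letter `g`, encoded in one number. -/
def column (T : Table) : ℕ → ℕ :=
  List.rec (motive := fun _ ↦ ℕ → ℕ) (fun _ ↦ 0)
    (fun C _ column' g ↦ Nat.rec (motive := fun _ ↦ ℕ) C (fun k _ ↦ column' k) g) T

/-- The digit `i` of `C` in base `4096`. -/
def digit (C i : ℕ) : ℕ := Nat.mod (Nat.shiftRight C (Nat.mul 12 i)) 4096

/-- The image of the coset `i` under the letter `g`, or `0` while it is unknown. -/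
def entry (T : Table) (g i : ℕ) : ℕ := digit (column T g) i

/-- Record that the letter `g` carries `i` to `v`, if the image of `i` is not known yet. -/
def write (T : Table) (g i v : ℕ) : Table :=
  ifPos (entry T g i)
    (bif Nat.blt v 4096 then
      ifPos (column T g ^^^ (v + v <<< (12 * i))) T fun C ↦ T.set g C
    else T) fun _ ↦ T

/-- Starting at `i`, read the word `q` from right to left through the table; `0` if it leaves it. -/
def back (T : Table) (i : ℕ) (q : List ℕ) : ℕ :=
  List.rec i (fun g _ j ↦ ifPos j 0 (entry T g)) q

/-- Read `q` through the table from `j` on, knowing that it leads to `i`. If all letters but one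
can be read, from the two ends, add to `w` the edge deduced for that letter. -/
def scan (T : Table) (i : ℕ) (q : List ℕ) : ℕ → List Edge → List Edge :=
  List.rec (motive := fun _ ↦ ℕ → List Edge → List Edge) (fun _ w ↦ w)
    (fun g q scan' j w ↦
      ifPos (entry T g j) (ifPos (back T i q) w fun k ↦ ⟨j, g, k⟩ :: w) fun k ↦ scan' k w) q

/-- `scan` for all words `q` in `Q`. -/
def scanAll (T : Table) (i j : ℕ) (Q : List (List ℕ)) (w : List Edge) : List Edge :=
  List.rec (motive := fun _ ↦ List Edge → List Edge) id (fun q _ ih w ↦ ih (scan T i q j w)) Q w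

/-- The words `q` such that `g :: q` is a cyclic rotation of a relator; a pair `(r, m)` in `R`
stands for the relator `r ^ m`. -/
def rotations (R : List (List ℕ × ℕ)) (g : ℕ) : List (List ℕ) :=
  R.flatMap fun (r, m) ↦ (List.range r.length).filterMap fun k ↦
    match (List.replicate m (r.rotate k)).flatten with
    | [] => none
    | h :: q => if h = g then some q else none

/-- Enter an edge into the table and append its consequences to the work list `w`. -/
def insert (R : List (List ℕ × ℕ)) (T : Table) : Edge → List Edge → Table × List Edge
  | ⟨i, g, j⟩, w => ifPos (entry T g i)
    (let T' := write (write T g i j) g j i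
     (T', scanAll T' i j (rotations R g) w)) fun _ ↦ (T, w)

/-- Insert edges, for at most `fuel` steps, until the work list is empty. -/
def close (R : List (List ℕ × ℕ)) (fuel : ℕ) : Table × List Edge → Table :=
  Nat.rec (motive := fun _ ↦ Table × List Edge → Table) Prod.fst
    (fun _ close' s ↦ match s with
      | (T, []) => T
      | (T, e :: w) => close' (insert R T e w)) fuel

/-- State of a coset enumeration: `next` is the first unused coset number, and the binary digits of
`postponed` say for which of the empty slots still to be visited no coset is to be introduced. -/
structure State where
  table : Table
  next : ℕ
  postponed : ℕ

/-- Make sure that the letter `g` has a value at the coset `i`, if necessary by introducing a coset,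
unless this slot is postponed. -/
def visitSlot (R : List (List ℕ × ℕ)) (i g : ℕ) : State → State
  | ⟨T, n, b⟩ => ifPos (entry T g i)
    (bif b.testBit 0 then ⟨T, n, b / 2⟩
      else ⟨close R 100000 (T, [⟨i, g, n⟩]), n + 1, b / 2⟩) fun _ ↦ ⟨T, n, b⟩

/-- Visit the slots of all letters in `gens` at the coset `i`. -/
def visit (R : List (List ℕ × ℕ)) (gens : List ℕ) (i : ℕ) (s : State) : State :=
  gens.foldl (fun s g ↦ visitSlot R i g s) s

/-- Visit the cosets `i`, `i + 1`, …, as long as there are any but at most `fuel` of them. -/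
def visitFrom (R : List (List ℕ × ℕ)) (gens : List ℕ) (fuel : ℕ) : ℕ → State → State :=
  Nat.rec (motive := fun _ ↦ ℕ → State → State) (fun _ s ↦ s)
    (fun _ visitFrom' i s ↦
      bif Nat.blt i s.next then visitFrom' (i + 1) (visit R gens i s) else s) fuel

/-- Enumerate the cosets of `⟨fixed⟩` in `⟨gens⟩`, with `1` for the subgroup itself, visiting the
slots of at most `m` cosets. -/
def enumerate (R : List (List ℕ × ℕ)) (fixed gens : List ℕ) (postponed m : ℕ) : State :=
  visitFrom R gens m 1
    ⟨close R 100000 (List.replicate 8 0, fixed.map fun g ↦ ⟨1, g, 1⟩), 2, postponed⟩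

/-- Whether the letters in `gens` have values at all of the cosets `1, …, m`. -/
def isComplete (T : Table) (gens : List ℕ) (m : ℕ) : Bool :=
  (List.range m).all fun i ↦ gens.all fun g ↦ Nat.blt 0 (entry T g (i + 1))

/-- Whether the enumeration of the cosets of `⟨fixed⟩` in `⟨gens⟩` closes up with `m` cosets. -/
def succeeds (R : List (List ℕ × ℕ)) (fixed gens : List ℕ) (postponed m : ℕ) : Bool :=
  match enumerate R fixed gens postponed m with
  | ⟨T, n, _⟩ => n == m + 1 && isComplete T gens m

theorem ifPos_eq_ite {β : Type} (n : ℕ) (d : β) (c : ℕ → β) :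
    ifPos n d c = if n = 0 then d else c n := by
  cases n <;> rfl

theorem column_eq_getD (T : Table) (g : ℕ) : column T g = T.getD g 0 := by
  induction T generalizing g with
  | nil => rfl
  | cons C T ih => cases g with
    | zero => rfl
    | succ g => exact ih g

theorem digit_xor (C D i : ℕ) : digit (C ^^^ D) i = digit C i ^^^ digit D i := by
  change ((C ^^^ D) >>> (12 * i)) % 2 ^ 12 = _
  rw [Nat.shiftRight_xor_distrib, Nat.xor_mod_two_pow]
  rfl

theorem digit_add_shiftLeft {v i j : ℕ} (hv : v < 4096) (hi : 0 < i) (hj : 0 < j) :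
    digit (v + v <<< (12 * i)) j = if j = i then v else 0 := by
  have hdigit : digit (v + v <<< (12 * i)) j = (v + v * 4096 ^ i) / 4096 ^ j % 4096 := by
    change (v + v <<< (12 * i)) >>> (12 * j) % 4096 = _
    rw [Nat.shiftRight_eq_div_pow, Nat.shiftLeft_eq, pow_mul, pow_mul]
    norm_num
  have hvj : v < 4096 ^ j := hv.trans_le (Nat.le_self_pow hj.ne' 4096)
  rw [hdigit]
  rcases lt_trichotomy j i with hji | rfl | hij
  · obtain ⟨k, rfl⟩ := Nat.exists_eq_add_of_lt hji
    rw [if_neg hji.ne, show v * 4096 ^ (j + k + 1) = v * 4096 ^ (k + 1) * 4096 ^ j by ring,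
      Nat.add_mul_div_right _ _ (by positivity), Nat.div_eq_of_lt hvj, pow_succ, ← mul_assoc]
    simp
  · rw [if_pos rfl, Nat.add_mul_div_right _ _ (by positivity), Nat.div_eq_of_lt hvj, zero_add,
      Nat.mod_eq_of_lt hv]
  · have hlt : v + v * 4096 ^ i < 4096 ^ j :=
      calc v + v * 4096 ^ i < 4096 ^ i + v * 4096 ^ i := by
            have := Nat.le_self_pow hi.ne' 4096
            omega
        _ = (v + 1) * 4096 ^ i := by ring
        _ ≤ 4096 * 4096 ^ i := Nat.mul_le_mul_right _ hv
        _ = 4096 ^ (i + 1) := (pow_succ' ..).symm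
        _ ≤ 4096 ^ j := Nat.pow_le_pow_right (by norm_num) hij
    rw [if_neg hij.ne', Nat.div_eq_of_lt hlt]

theorem entry_write {T : Table} {g i v : ℕ} (hi : 0 < i) (h : ℕ) {j : ℕ} (hj : 0 < j) :
    entry (write T g i v) h j = entry T h j ∨
      h = g ∧ j = i ∧ entry (write T g i v) h j = v := by
  simp only [write, ifPos_eq_ite, cond_eq_ite, Nat.blt_eq]
  split_ifs with hempty hv hcol <;> try exact .inl rfl
  rcases eq_or_ne h g with rfl | hhg
  · by_cases hh : h < T.length
    · have hset : entry (T.set h (column T h ^^^ (v + v <<< (12 * i)))) h j =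
          entry T h j ^^^ if j = i then v else 0 := by
        rw [← digit_add_shiftLeft hv hi hj, entry, column_eq_getD, List.getD_eq_getElem?_getD,
          List.getElem?_set_self hh]
        exact digit_xor ..
      rcases eq_or_ne j i with rfl | hji
      · exact .inr ⟨rfl, rfl, by rw [hset, if_pos rfl, hempty, Nat.zero_xor]⟩
      · exact .inl (by rw [hset, if_neg hji, Nat.xor_zero])
    · exact .inl (by rw [List.set_eq_of_length_le (not_lt.mp hh)])
  · refine .inl (congrArg (digit · j) ?_)
    rw [column_eq_getD, column_eq_getD T h, List.getD_eq_getElem?_getD, List.getD_eq_getElem?_getD,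
      List.getElem?_set_ne hhg.symm]

section Soundness

variable {G X : Type*} [Group G] [MulAction G X] (x : ℕ → G) (P : ℕ → X) (n : ℕ)

/-- The letter `g` carries the coset `i` to the coset `j`, if cosets are interpreted as points of
`X` by `P` and letters as elements of `G` by `x`. Here `n` is the first unused coset number. -/
structure IsEdge (i g j : ℕ) : Prop where
  src : 0 < i ∧ i < n
  dst : 0 < j ∧ j < n
  smul : x g • P i = P j

/-- The known entries of the table are correct, in the interpretation given by `x` and `P`. -/
def IsTable (T : Table) : Prop :=
  ∀ g i, 0 < i → 0 < entry T g i → IsEdge x P n i g (entry T g i)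

/-- The edges in the work list are correct, in the interpretation given by `x` and `P`. -/
def AreEdges (w : List Edge) : Prop :=
  ∀ e ∈ w, IsEdge x P n e.src e.letter e.dst

variable {x P n}

theorem AreEdges.cons {w : List Edge} {i g j : ℕ} (he : IsEdge x P n i g j)
    (hw : AreEdges x P n w) : AreEdges x P n (⟨i, g, j⟩ :: w) :=
  List.forall_mem_cons.mpr ⟨he, hw⟩

theorem IsEdge.symm (hx : ∀ g, x g * x g = 1) {i g j : ℕ} (he : IsEdge x P n i g j) :
    IsEdge x P n j g i :=
  ⟨he.dst, he.src, by rw [← he.smul, smul_smul, hx, one_smul]⟩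

theorem IsTable.write {T : Table} (hT : IsTable x P n T) {i g j : ℕ} (he : IsEdge x P n i g j) :
    IsTable x P n (write T g i j) := by
  intro h k hk hpos
  rcases entry_write (T := T) (g := g) (v := j) he.src.1 h hk with hold | ⟨rfl, rfl, hnew⟩
  · rw [hold] at hpos ⊢
    exact hT h k hk hpos
  · rwa [hnew]

theorem IsTable.back {T : Table} (hT : IsTable x P n T) {i : ℕ} (hi : 0 < i ∧ i < n)
    (q : List ℕ) (hpos : 0 < back T i q) :
    (0 < back T i q ∧ back T i q < n) ∧ P (back T i q) = (q.map x).prod • P i := by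
  induction q with
  | nil => exact ⟨hi, by simp [CosetEnumeration.back]⟩
  | cons g q ih =>
    have hcons : CosetEnumeration.back T i (g :: q) =
        ifPos (CosetEnumeration.back T i q) 0 (entry T g) := rfl
    rw [hcons, ifPos_eq_ite] at hpos ⊢
    split_ifs at hpos ⊢ with hzero
    · exact absurd hpos (lt_irrefl 0)
    · obtain ⟨hrange, heq⟩ := ih (Nat.pos_of_ne_zero hzero)
      have he := hT g _ hrange.1 hpos
      exact ⟨he.dst, by rw [← he.smul, heq, smul_smul, List.map_cons, List.prod_cons]⟩

theorem IsTable.scan (hx : ∀ g, x g * x g = 1) {T : Table} (hT : IsTable x P n T) {i : ℕ}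
    (hi : 0 < i ∧ i < n) {w : List Edge} (hw : AreEdges x P n w) (q : List ℕ) {j : ℕ}
    (hj : 0 < j ∧ j < n) (hq : P j = (q.map x).prod • P i) :
    AreEdges x P n (scan T i q j w) := by
  induction q generalizing j with
  | nil => exact hw
  | cons g q ih =>
    have hcons : CosetEnumeration.scan T i (g :: q) j w = ifPos (entry T g j)
        (ifPos (CosetEnumeration.back T i q) w fun k ↦ ⟨j, g, k⟩ :: w)
        fun k ↦ CosetEnumeration.scan T i q k w := rfl
    have hgj : x g • P j = (q.map x).prod • P i := by
      rw [hq, List.map_cons, List.prod_cons, smul_smul, ← mul_assoc, hx, one_mul]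
    rw [hcons]
    simp only [ifPos_eq_ite]
    split_ifs with hentry hback
    · exact hw
    · obtain ⟨hk, heq⟩ := hT.back hi q (Nat.pos_of_ne_zero hback)
      exact hw.cons ⟨hj, hk, hgj.trans heq.symm⟩
    · have he := hT g j hj.1 (Nat.pos_of_ne_zero hentry)
      exact ih he.dst (he.smul.symm.trans hgj)

theorem IsTable.scanAll (hx : ∀ g, x g * x g = 1) {T : Table} (hT : IsTable x P n T) {i g j : ℕ}
    (he : IsEdge x P n i g j) (Q : List (List ℕ)) (hQ : ∀ q ∈ Q, (q.map x).prod = x g)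
    {w : List Edge} (hw : AreEdges x P n w) :
    AreEdges x P n (scanAll T i j Q w) := by
  induction Q generalizing w with
  | nil => exact hw
  | cons q Q ih =>
    have ⟨hq, hQ⟩ := List.forall_mem_cons.mp hQ
    exact ih hQ (hT.scan hx he.src hw q he.dst (by rw [hq, he.smul]))

/-- The letters satisfy the relators in `R`, a pair `(r, m)` standing for the relator `r ^ m`. -/
def Satisfies (x : ℕ → G) (R : List (List ℕ × ℕ)) : Prop :=
  ∀ r ∈ R, (r.1.map x).prod ^ r.2 = 1

theorem prod_rotate_pow_eq_one (u : List G) (k m : ℕ) (hu : u.prod ^ m = 1) :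
    (u.rotate k).prod ^ m = 1 := by
  induction k generalizing u with
  | zero => simpa using hu
  | succ k ih =>
    cases u with
    | nil => simp
    | cons a u =>
      rw [List.rotate_cons_succ]
      refine ih _ ?_
      rw [List.prod_cons] at hu
      simpa [hu, mul_assoc] using conj_pow (i := m) (a := a⁻¹) (b := a * u.prod)

theorem Satisfies.prod_rotation (hx : ∀ g, x g * x g = 1) {R : List (List ℕ × ℕ)}
    (hR : Satisfies x R) {g : ℕ} {q : List ℕ} (hq : q ∈ rotations R g) :
    (q.map x).prod = x g := by
  simp only [rotations, List.mem_flatMap, List.mem_filterMap] at hq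
  obtain ⟨⟨r, m⟩, hr, k, -, hk⟩ := hq
  split at hk
  · cases hk
  · next h q' hword =>
    obtain ⟨rfl, rfl⟩ : h = g ∧ q' = q := by simpa using hk
    have hrot : ((r.rotate k).map x).prod ^ m = 1 := by
      rw [List.map_rotate]
      exact prod_rotate_pow_eq_one _ k m (hR _ hr)
    have hprod : x h * (q'.map x).prod = 1 := by
      rw [← List.prod_cons, ← List.map_cons, ← hword, List.map_flatten, List.map_replicate,
        List.prod_flatten, List.map_replicate, List.prod_replicate, hrot]
    exact mul_left_cancel (hprod.trans (hx h).symm)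

theorem IsTable.insert (hx : ∀ g, x g * x g = 1) {R : List (List ℕ × ℕ)} (hR : Satisfies x R)
    {T : Table} (hT : IsTable x P n T) {e : Edge} {w : List Edge} (hew : AreEdges x P n (e :: w)) :
    IsTable x P n (insert R T e w).1 ∧ AreEdges x P n (insert R T e w).2 := by
  obtain ⟨he, hw⟩ := List.forall_mem_cons.mp hew
  simp only [CosetEnumeration.insert, ifPos_eq_ite]
  split_ifs
  · have hT' := (hT.write he).write (he.symm hx)
    exact ⟨hT', hT'.scanAll hx he _ (fun q hq ↦ hR.prod_rotation hx hq) hw⟩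
  · exact ⟨hT, hw⟩

theorem IsTable.close (hx : ∀ g, x g * x g = 1) {R : List (List ℕ × ℕ)} (hR : Satisfies x R)
    (fuel : ℕ) {T : Table} (hT : IsTable x P n T) {w : List Edge} (hw : AreEdges x P n w) :
    IsTable x P n (close R fuel (T, w)) := by
  induction fuel generalizing T w with
  | zero => exact hT
  | succ fuel ih =>
    cases w with
    | nil => exact hT
    | cons e w =>
      obtain ⟨hT', hw'⟩ := hT.insert hx hR hw
      exact ih hT' hw'

/-- A state is valid for the action of the letters through `x` if its cosets can be interpreted as
points of the orbit of `x₀` in such a way that its table is correct. -/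
def State.IsValid (x : ℕ → G) (x₀ : X) (s : State) : Prop :=
  1 < s.next ∧ ∃ P : ℕ → X, P 1 = x₀ ∧ IsTable x P s.next s.table

theorem IsEdge.update {i g j : ℕ} (he : IsEdge x P n i g j) (y : X) :
    IsEdge x (Function.update P n y) (n + 1) i g j where
  src := ⟨he.src.1, he.src.2.trans n.lt_succ_self⟩
  dst := ⟨he.dst.1, he.dst.2.trans n.lt_succ_self⟩
  smul := by
    rw [Function.update_of_ne he.src.2.ne, Function.update_of_ne he.dst.2.ne, he.smul]

theorem State.IsValid.visitSlot (hx : ∀ g, x g * x g = 1) {R : List (List ℕ × ℕ)}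
    (hR : Satisfies x R) {x₀ : X} {s : State} (hs : s.IsValid x x₀) {i : ℕ} (g : ℕ)
    (hi : 0 < i ∧ i < s.next) :
    (visitSlot R i g s).IsValid x x₀ ∧ s.next ≤ (visitSlot R i g s).next := by
  obtain ⟨T, n, b⟩ := s
  have ⟨(hn : 1 < n), P, hbase, (hT : IsTable x P n T)⟩ := hs
  have hi : 0 < i ∧ i < n := hi
  simp only [CosetEnumeration.visitSlot, ifPos_eq_ite, cond_eq_ite]
  split_ifs
  · exact ⟨hs, le_rfl⟩
  · have hnew : IsEdge x (Function.update P n (x g • P i)) (n + 1) i g n :=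
      { src := ⟨hi.1, Nat.lt_succ_of_lt hi.2⟩
        dst := ⟨zero_lt_one.trans hn, n.lt_succ_self⟩
        smul := by rw [Function.update_of_ne hi.2.ne, Function.update_self] }
    have hT' : IsTable x (Function.update P n (x g • P i)) (n + 1) T :=
      fun h k hk hpos ↦ (hT h k hk hpos).update _
    exact ⟨⟨Nat.lt_succ_of_lt hn, Function.update P n (x g • P i),
      (Function.update_of_ne hn.ne ..).trans hbase,
      hT'.close hx hR 100000 (List.forall_mem_singleton.mpr hnew)⟩, n.le_succ⟩
  · exact ⟨hs, le_rfl⟩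

theorem State.IsValid.visit (hx : ∀ g, x g * x g = 1) {R : List (List ℕ × ℕ)}
    (hR : Satisfies x R) {x₀ : X} (gens : List ℕ) {s : State} (hs : s.IsValid x x₀) {i : ℕ}
    (hi : 0 < i ∧ i < s.next) : (visit R gens i s).IsValid x x₀ := by
  induction gens generalizing s with
  | nil => exact hs
  | cons g gens ih =>
    have ⟨hs', hle⟩ := hs.visitSlot hx hR g hi
    exact ih hs' ⟨hi.1, hi.2.trans_le hle⟩

theorem State.IsValid.visitFrom (hx : ∀ g, x g * x g = 1) {R : List (List ℕ × ℕ)}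
    (hR : Satisfies x R) {x₀ : X} (gens : List ℕ) (fuel : ℕ) {s : State} (hs : s.IsValid x x₀)
    {i : ℕ} (hi : 0 < i) : (visitFrom R gens fuel i s).IsValid x x₀ := by
  induction fuel generalizing i s with
  | zero => exact hs
  | succ fuel ih =>
    have hsucc : CosetEnumeration.visitFrom R gens (fuel + 1) i s = bif Nat.blt i s.next then
        CosetEnumeration.visitFrom R gens fuel (i + 1) (CosetEnumeration.visit R gens i s)
      else s := rfl
    simp only [hsucc, cond_eq_ite, Nat.blt_eq]
    split_ifs with hlt
    · exact ih (hs.visit hx hR gens ⟨hi, hlt⟩) i.succ_pos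
    · exact hs

theorem isValid_enumerate (hx : ∀ g, x g * x g = 1) {R : List (List ℕ × ℕ)}
    (hR : Satisfies x R) {x₀ : X} {fixed : List ℕ} (hfixed : ∀ g ∈ fixed, x g • x₀ = x₀)
    (gens : List ℕ) (postponed m : ℕ) :
    (enumerate R fixed gens postponed m).IsValid x x₀ := by
  have hempty : IsTable x (fun _ ↦ x₀) 2 (List.replicate 8 0) := by
    intro g i _ hpos
    have hzero : entry (List.replicate 8 0) g i = 0 := by
      rw [entry, column_eq_getD, List.getD_eq_getElem?_getD,
        List.getElem?_getD_replicate_default_eq, digit]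
      simp
    omega
  have hw : AreEdges x (fun _ ↦ x₀) 2 (fixed.map fun g ↦ ⟨1, g, 1⟩) := by
    intro e he
    obtain ⟨g, hg, rfl⟩ := List.mem_map.mp he
    exact ⟨⟨one_pos, one_lt_two⟩, ⟨one_pos, one_lt_two⟩, hfixed g hg⟩
  exact State.IsValid.visitFrom hx hR gens m
    ⟨one_lt_two, fun _ ↦ x₀, rfl, hempty.close hx hR 100000 hw⟩ one_pos

open scoped Pointwise in
theorem State.IsValid.ncard_orbit_le {x₀ : X} {s : State} (hs : s.IsValid x x₀) {gens : List ℕ}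
    {m : ℕ} (hnext : s.next = m + 1) (hcomplete : isComplete s.table gens m) :
    (MulAction.orbit (Subgroup.closure (x '' {g | g ∈ gens})) x₀).Finite ∧
      (MulAction.orbit (Subgroup.closure (x '' {g | g ∈ gens})) x₀).ncard ≤ m := by
  obtain ⟨hn, P, rfl, hT⟩ := hs
  have hfinite : (P '' Set.Icc 1 m).Finite := (Set.finite_Icc 1 m).image P
  have hstable : Subgroup.closure (x '' {g | g ∈ gens}) ≤
      MulAction.stabilizer G (P '' Set.Icc 1 m) := by
    rw [Subgroup.closure_le]
    rintro _ ⟨g, hg, rfl⟩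
    refine (MulAction.mem_stabilizer_set' hfinite).mpr ?_
    rintro _ ⟨i, ⟨hi, him⟩, rfl⟩
    have hpos : 0 < entry s.table g i := by
      simp only [isComplete, List.all_eq_true, List.mem_range, Nat.blt_eq] at hcomplete
      simpa only [Nat.sub_add_cancel hi] using hcomplete (i - 1) (by omega) g hg
    have he := hT g i hi hpos
    exact ⟨_, ⟨he.dst.1, by have := he.dst.2; omega⟩, he.smul.symm⟩
  have horbit : MulAction.orbit (Subgroup.closure (x '' {g | g ∈ gens})) (P 1) ⊆
      P '' Set.Icc 1 m := by
    rintro _ ⟨⟨h, hh⟩, rfl⟩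
    exact (MulAction.mem_stabilizer_set' hfinite).mp (hstable hh)
      ⟨1, ⟨le_rfl, by omega⟩, rfl⟩
  refine ⟨hfinite.subset horbit, (Set.ncard_le_ncard horbit hfinite).trans ?_⟩
  exact (Set.ncard_image_le (Set.finite_Icc 1 m)).trans (by simp [Set.ncard_eq_toFinset_card'])

theorem relIndex_le_of_succeeds (hx : ∀ g, x g * x g = 1) {R : List (List ℕ × ℕ)}
    (hR : Satisfies x R) {fixed gens : List ℕ} {postponed m : ℕ}
    (h : succeeds R fixed gens postponed m) :
    (Subgroup.closure (x '' {g | g ∈ fixed})).relIndex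
      (Subgroup.closure (x '' {g | g ∈ gens})) ≠ 0 ∧
    (Subgroup.closure (x '' {g | g ∈ fixed})).relIndex
      (Subgroup.closure (x '' {g | g ∈ gens})) ≤ m := by
  set H := Subgroup.closure (x '' {g | g ∈ fixed})
  set K := Subgroup.closure (x '' {g | g ∈ gens})
  have hfixed : ∀ g ∈ fixed, x g • ((1 : G) : G ⧸ H) = ((1 : G) : G ⧸ H) := fun g hg ↦ by
    rw [MulAction.Quotient.smul_coe, smul_eq_mul, mul_one, eq_comm, QuotientGroup.eq]
    simpa using Subgroup.subset_closure (Set.mem_image_of_mem x hg)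
  obtain ⟨hnext, hcomplete⟩ : (enumerate R fixed gens postponed m).next = m + 1 ∧
      isComplete (enumerate R fixed gens postponed m).table gens m := by
    rwa [succeeds, Bool.and_eq_true, beq_iff_eq] at h
  obtain ⟨hfinite, hcard⟩ :=
    (isValid_enumerate hx hR hfixed gens postponed m).ncard_orbit_le hnext hcomplete
  have hstab : MulAction.stabilizer K ((1 : G) : G ⧸ H) = H.subgroupOf K := by
    ext k
    rw [MulAction.mem_stabilizer_iff, Subgroup.mem_subgroupOf, eq_comm]
    change ((1 : G) : G ⧸ H) = ((k * 1 : G) : G ⧸ H) ↔ _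
    rw [mul_one, QuotientGroup.eq, inv_one, one_mul]
  rw [Subgroup.relIndex, ← hstab, MulAction.index_stabilizer]
  exact ⟨(Set.ncard_pos hfinite).mpr ⟨_, MulAction.mem_orbit_self _⟩ |>.ne', hcard⟩

end Soundness

/-- The relators of `L` except for the squares of the letters `a, b, c, d, e, f, σ, τ`, which are
numbered from `0` to `7`. -/
def relators : List (List ℕ × ℕ) :=
  [([0, 1], 3), ([1, 2], 3), ([2, 3], 4), ([3, 4], 3), ([4, 5], 3), ([0, 2], 2), ([0, 3], 2),
    ([0, 4], 2), ([0, 5], 2), ([1, 3], 2), ([1, 4], 2), ([1, 5], 2), ([2, 4], 2), ([2, 5], 2),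
    ([3, 5], 2), ([6, 1, 2, 3, 2, 1], 1), ([7, 4, 3, 2, 3, 4], 1), ([0, 6, 7, 6], 3),
    ([5, 7, 6, 7], 3)]

/-- The slots of the table for `⟨a, b, c, d, e⟩` in `L` which the enumeration leaves to later
deductions. As no coset gets two numbers when these slots are postponed, the enumeration can do
without identifying cosets. -/
def postponedSlots : ℕ :=
  Nat.ofDigits (10 ^ 90) [
    948682668168110408971767563099415877707425883836605266836310392550509134207075758307803136,
    418831526131921492829567956271265176910390402203077478084990049262425126434138338804821433,
    132500039139359156339701267846015515502794283615831502131079391397286557823058352789257141,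
    747727971733206186568723309684171944650940169848093194505212785240643540827924215292593909,
    234283870627075912433711591889221030185205696654225411732623617987442134337438685329724741,
    934072883043530146103375558803090664542780425880283678538711109191781007389176187756959219,
    803342981787819222943079106415433215109967335200356032096273802960535971555294422026418319,
    174006933541021235061804956094901685271440932738666035678644247444866201320960185857644543,
    725572100963399438242278610521913396388650289892149468496895383346939238642631370682340825,
    913659790938425053519709510145383115849177882832580155788444627021214526033239266505795135,
    648748887530546108937677174431114979921681913341310696074729383002531657802365184598866262,
    596938785174196305328053787790600526546442470687375384443852]

set_option maxRecDepth 1000000 in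
theorem succeeds_bcd : succeeds relators [] [1, 2, 3] 0 48 := by decide +kernel

set_option maxRecDepth 1000000 in
theorem succeeds_bcde : succeeds relators [1, 2, 3] [1, 2, 3, 4] 0 24 := by decide +kernel

set_option maxRecDepth 1000000 in
theorem succeeds_abcde : succeeds relators [1, 2, 3, 4] [0, 1, 2, 3, 4] 0 81 := by
  decide +kernel

set_option maxRecDepth 1000000 in
theorem succeeds_abcdef :
    succeeds relators [0, 1, 2, 3, 4] [0, 1, 2, 3, 4, 5] postponedSlots 2340 := by
  decide +kernel

theorem w_mul_w_pow (i j : Fin 6) : (w i * w j) ^ cox6 i j = 1 := by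
  have h := PresentedGroup.one_of_mem (rels := rels6) ⟨(i, j), rfl⟩
  rwa [map_pow, map_mul] at h

theorem w_mul_self (i : Fin 6) : w i * w i = 1 := by
  have h := w_mul_w_pow i i
  rwa [cox6, if_pos rfl, pow_one] at h

theorem sg_mul_self : sg * sg = 1 := by
  have h := conj_mul_self (w_mul_self 1) (conj_mul_self (w_mul_self 2) (w_mul_self 3))
  simpa only [sg, mul_assoc] using h

theorem tu_mul_self : tu * tu = 1 := by
  have h := conj_mul_self (w_mul_self 4) (conj_mul_self (w_mul_self 3) (w_mul_self 2))
  simpa only [tu, mul_assoc] using h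

/-- The elements `a, b, c, d, e, f, σ, τ` of the Coxeter group. -/
def letter (k : ℕ) : W := [w 0, w 1, w 2, w 3, w 4, w 5, sg, tu].getD k 1

theorem letter_val (i : Fin 6) : letter i = w i := by fin_cases i <;> rfl

theorem letter_mul_self (k : ℕ) : letter k * letter k = 1 :=
  match k with
  | 0 | 1 | 2 | 3 | 4 | 5 => w_mul_self _
  | 6 => sg_mul_self
  | 7 => tu_mul_self
  | _ + 8 => mul_one 1

theorem coe_letter_mul_self (k : ℕ) : (letter k : L) * letter k = 1 :=
  congrArg (QuotientGroup.mk' _) (letter_mul_self k)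

theorem prod_letter_pow_eq_one {r : List ℕ × ℕ} (hr : r ∈ relators.take 17) :
    (r.1.map letter).prod ^ r.2 = 1 := by
  have hcases : ∀ r ∈ relators.take 17, (∃ i j : Fin 6, r = ([(i : ℕ), (j : ℕ)], cox6 i j)) ∨
      r = ([6, 1, 2, 3, 2, 1], 1) ∨ r = ([7, 4, 3, 2, 3, 4], 1) := by
    decide
  rcases hcases r hr with ⟨i, j, rfl⟩ | rfl | rfl
  · simp only [List.map_cons, List.map_nil, List.prod_cons, List.prod_nil, mul_one, letter_val,
      w_mul_w_pow]
  · calc ([6, 1, 2, 3, 2, 1].map letter).prod ^ 1 = sg * sg := by simp [letter, sg, mul_assoc]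
      _ = 1 := sg_mul_self
  · calc ([7, 4, 3, 2, 3, 4].map letter).prod ^ 1 = tu * tu := by simp [letter, tu, mul_assoc]
      _ = 1 := tu_mul_self

theorem satisfies_relators : Satisfies (fun k ↦ (letter k : L)) relators := by
  intro r hr
  suffices h : (((r.1.map letter).prod ^ r.2 : W) : L) = 1 by
    rwa [← QuotientGroup.mk'_apply, map_pow, map_list_prod, List.map_map] at h
  rw [← List.take_append_drop 17 relators, List.mem_append] at hr
  rcases hr with hr | hr
  · exact congrArg (QuotientGroup.mk' _) (prod_letter_pow_eq_one hr)
  · refine (QuotientGroup.eq_one_iff _).mpr (Subgroup.subset_normalClosure ?_)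
    have hcases : ∀ r ∈ relators.drop 17, r = ([0, 6, 7, 6], 3) ∨ r = ([5, 7, 6, 7], 3) := by
      decide
    rcases hcases r hr with rfl | rfl
    · exact .inl (by simp [letter, mul_assoc])
    · exact .inr (by simp [letter, mul_assoc])

/-- The subgroup of `L` generated by the letters in `s`. -/
def parabolic (s : List ℕ) : Subgroup L :=
  Subgroup.closure ((fun k ↦ (letter k : L)) '' {g | g ∈ s})

theorem parabolic_nil : parabolic [] = ⊥ := by
  simp [parabolic]

theorem parabolic_mono {s t : List ℕ} (h : s ⊆ t) : parabolic s ≤ parabolic t :=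
  Subgroup.closure_mono (Set.image_mono h)

theorem parabolic_eq_top : parabolic [0, 1, 2, 3, 4, 5] = ⊤ := by
  have hletter : ∀ i : Fin 6, (i : ℕ) ∈ [0, 1, 2, 3, 4, 5] := by decide
  rw [eq_top_iff, ← MonoidHom.range_eq_top.mpr (QuotientGroup.mk'_surjective _),
    MonoidHom.range_eq_map, ← PresentedGroup.closure_range_of, Subgroup.map_le_iff_le_comap,
    Subgroup.closure_le]
  rintro _ ⟨i, rfl⟩
  exact Subgroup.subset_closure ⟨i, hletter i, congrArg (QuotientGroup.mk' _) (letter_val i)⟩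

theorem relIndex_parabolic {s t : List ℕ} {b m : ℕ} (h : succeeds relators s t b m) :
    (parabolic s).relIndex (parabolic t) ≠ 0 ∧ (parabolic s).relIndex (parabolic t) ≤ m :=
  relIndex_le_of_succeeds coe_letter_mul_self satisfies_relators h

theorem finite_and_card_le : Finite L ∧ Nat.card L ≤ 218350080 := by
  obtain ⟨hne₁, hle₁⟩ := relIndex_parabolic succeeds_bcd
  obtain ⟨hne₂, hle₂⟩ := relIndex_parabolic succeeds_bcde
  obtain ⟨hne₃, hle₃⟩ := relIndex_parabolic succeeds_abcde
  obtain ⟨hne₄, hle₄⟩ := relIndex_parabolic succeeds_abcdef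
  have hcard : Nat.card L = (parabolic []).relIndex (parabolic [1, 2, 3]) *
      (parabolic [1, 2, 3]).relIndex (parabolic [1, 2, 3, 4]) *
      (parabolic [1, 2, 3, 4]).relIndex (parabolic [0, 1, 2, 3, 4]) *
      (parabolic [0, 1, 2, 3, 4]).relIndex (parabolic [0, 1, 2, 3, 4, 5]) := by
    repeat rw [Subgroup.relIndex_mul_relIndex _ _ _ (parabolic_mono (by decide))
      (parabolic_mono (by decide))]
    rw [parabolic_nil, parabolic_eq_top, Subgroup.relIndex_bot_left, Subgroup.card_top]
  rw [hcard]
  refine ⟨Nat.finite_of_card_ne_zero ?_, ?_⟩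
  · rw [hcard]
    exact mul_ne_zero (mul_ne_zero (mul_ne_zero hne₁ hne₂) hne₃) hne₄
  · calc _ ≤ 48 * 24 * 81 * 2340 := by gcongr
      _ = 218350080 := by norm_num

end CosetEnumeration

/-- L is finite of order 2^9 * 3^8 * 5 * 13 = 218350080, and has a normal subgroup of
index 4 isomorphic to (Z/3 × Z/3) × PSL(4,3); thus L ≅ (3^2 × L_4(3)).2^2. -/
theorem stmt_15 :
    Finite L ∧ Nat.card L = 2 ^ 9 * 3 ^ 8 * 5 * 13 ∧
    ∃ N : Subgroup L, N.Normal ∧ N.index = 4 ∧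
      Nonempty (N ≃* (Multiplicative (ZMod 3) × Multiplicative (ZMod 3)) × PSL43) := by
  obtain ⟨hfinite, hle⟩ := CosetEnumeration.finite_and_card_le
  have hge : Nat.card Target.T ≤ Nat.card L :=
    Nat.card_le_card_of_surjective _ Target.toTarget_surjective
  have hcard : Nat.card L = Nat.card Target.T := le_antisymm (hle.trans Target.card_T.ge) hge
  let e : L ≃* Target.T := .ofBijective Target.toTarget <|
    (Nat.bijective_iff_surjective_and_card _).mpr ⟨Target.toTarget_surjective, hcard⟩
  refine ⟨hfinite, hcard.trans Target.card_T,
    SemidirectProduct.rightHom.ker.comap (e : L →* Target.T), inferInstance, ?_,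
    nonempty_comap_ker_rightHom_mulEquiv e⟩
  rw [Subgroup.index_comap_of_surjective _ (f := (e : L →* Target.T)) e.surjective,
    Subgroup.index_ker, MonoidHom.range_eq_top.mpr SemidirectProduct.rightHom_surjective,
    Subgroup.card_top, Nat.card_eq_fintype_card]
  rfl
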